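/- arXiv:1212.6085 — 7 statements merged into one kernel-verified Lean document; each statement's English description precedes it below -/
import Mathlib

section
/- Let n ≥ 1 and let A = (a_{ij}) be an n×n matrix with entries in ℝ ∪ {−∞}. Suppose λ ∈ ℝ, u ∈ ℝⁿ is a max-plus eigenvector of A with eigenvalue λ (for every i, max_{1≤j≤n} (a_{ij} + u_j) = λ + u_i), and v ∈ ℝⁿ is a max-plus eigenvector of Aᵀ with the same eigenvalue λ (for every i, max_{1≤j≤n} (a_{ji} + v_j) = λ + v_i). Then for every real α with 0 ≤ α ≤ 1, the vector x with entries x_i = α·u_i + (α − 1)·v_i satisfies max_{1≤i,j≤n} (a_{ij} + x_j − x_i) = λ. -/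
/-- The max-plus "Rayleigh quotient": `max_{i,j} (a_{ij} + x_j - x_i)`,
with entries in `ℝ ∪ {-∞}` modeled as `WithBot ℝ`. -/
noncomputable def maxPlusRayleigh {n : ℕ} [NeZero n] (A : Fin n → Fin n → WithBot ℝ)
    (x : Fin n → ℝ) : WithBot ℝ :=
  Finset.univ.sup' Finset.univ_nonempty
    (fun p : Fin n × Fin n => A p.1 p.2 + ((x p.2 - x p.1 : ℝ) : WithBot ℝ))

/-- `(lam, u)` is a max-plus eigenpair of `A`: for every `i`,
`max_j (a_{ij} + u_j) = lam + u_i`. -/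
def IsMaxPlusEigenpair {n : ℕ} [NeZero n] (A : Fin n → Fin n → WithBot ℝ)
    (lam : ℝ) (u : Fin n → ℝ) : Prop :=
  ∀ i, Finset.univ.sup' Finset.univ_nonempty
    (fun j => A i j + ((u j : ℝ) : WithBot ℝ)) = ((lam + u i : ℝ) : WithBot ℝ)

/-!
The finite vectors `x` with `a_{ij} + x_j - x_i ≤ λ` for all `i, j` form a convex set. It contains
`u` and also `-v`, because transposing `A` amounts to negating the vector, so it contains
`x = α u + (1 - α)(-v)`. Conversely no vector `x` has a quotient below `λ`: in a row `i` that
maximizes `u - x`, an index `j` attaining `a_{ij} + u_j = λ + u_i` satisfies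
`x_j - x_i ≥ u_j - u_i`, so `a_{ij} + x_j - x_i ≥ λ`.
-/

variable {ι R G : Type*}

section Definitions

variable [Add G] [LE G]

/-- `x` is a max-plus subeigenvector of `A` for `lam`, that is `A ⊗ x ≤ lam ⊗ x`, written entrywise
so that no maximum has to exist. The entries of `x` are finite, those of `A` may be `⊥ = -∞`. -/
def IsMaxPlusSubeigenvector (A : ι → ι → WithBot G) (lam : G) (x : ι → G) : Prop :=
  ∀ i j, A i j + (x j : WithBot G) ≤ ((lam + x i : G) : WithBot G)

/-- `x` is a max-plus supereigenvector of `A` for `lam`, that is `lam ⊗ x ≤ A ⊗ x`, where in each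
row some entry is required to witness the inequality. -/
def IsMaxPlusSupereigenvector (A : ι → ι → WithBot G) (lam : G) (x : ι → G) : Prop :=
  ∀ i, ∃ j, ((lam + x i : G) : WithBot G) ≤ A i j + (x j : WithBot G)

end Definitions

section OrderedGroup

variable [AddCommGroup G]

theorem withBot_add_coe_sub_add_coe (a : WithBot G) (p q : G) :
    a + ((p - q : G) : WithBot G) + (q : WithBot G) = a + (p : WithBot G) := by
  rw [add_assoc, ← WithBot.coe_add, sub_add_cancel]

variable [PartialOrder G] [IsOrderedAddMonoid G]

theorem withBot_add_coe_sub_le_coe_iff {a : WithBot G} {p q r : G} :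
    a + ((p - q : G) : WithBot G) ≤ (r : WithBot G) ↔
      a + (p : WithBot G) ≤ ((r + q : G) : WithBot G) := by
  rw [← WithBot.add_le_add_iff_right (WithBot.coe_ne_bot (a := q)), withBot_add_coe_sub_add_coe,
    WithBot.coe_add]

theorem withBot_coe_le_add_coe_sub_iff {a : WithBot G} {p q r : G} :
    (r : WithBot G) ≤ a + ((p - q : G) : WithBot G) ↔
      ((r + q : G) : WithBot G) ≤ a + (p : WithBot G) := by
  rw [← WithBot.add_le_add_iff_right (WithBot.coe_ne_bot (a := q)), withBot_add_coe_sub_add_coe,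
    WithBot.coe_add]

variable {A : ι → ι → WithBot G} {lam : G} {x : ι → G}

theorem isMaxPlusSubeigenvector_iff_add_sub_le :
    IsMaxPlusSubeigenvector A lam x ↔
      ∀ i j, A i j + ((x j - x i : G) : WithBot G) ≤ (lam : WithBot G) :=
  forall₂_congr fun _ _ => withBot_add_coe_sub_le_coe_iff.symm

theorem IsMaxPlusSubeigenvector.neg_of_transpose
    (hx : IsMaxPlusSubeigenvector (fun i j => A j i) lam x) :
    IsMaxPlusSubeigenvector A lam (-x) := by
  rw [isMaxPlusSubeigenvector_iff_add_sub_le] at hx ⊢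
  intro i j
  rw [Pi.neg_apply, Pi.neg_apply, neg_sub_neg]
  exact hx j i

theorem convex_setOf_isMaxPlusSubeigenvector [Semiring R] [PartialOrder R] [Module R G]
    [PosSMulMono R G] (A : ι → ι → WithBot G) (lam : G) :
    Convex R {x | IsMaxPlusSubeigenvector A lam x} := by
  intro x hx y hy a b ha hb hab i j
  have hxij := hx i j
  have hyij := hy i j
  generalize A i j = c at hxij hyij ⊢
  induction c with
  | bot => exact bot_le
  | coe c =>
    norm_cast at hxij hyij ⊢
    calc c + (a • x + b • y) j
        = a • (c + x j) + b • (c + y j) := by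
          rw [smul_add, smul_add, add_add_add_comm, Convex.combo_self hab]; rfl
      _ ≤ a • (lam + x i) + b • (lam + y i) := by gcongr
      _ = lam + (a • x + b • y) i := by
          rw [smul_add, smul_add, add_add_add_comm, Convex.combo_self hab]; rfl

end OrderedGroup

section LinearOrderedGroup

variable [AddCommGroup G] [LinearOrder G] [IsOrderedAddMonoid G]
  {A : ι → ι → WithBot G} {lam : G}

theorem IsMaxPlusSupereigenvector.exists_le_add_sub [Finite ι] [Nonempty ι] {w : ι → G}
    (hw : IsMaxPlusSupereigenvector A lam w) (x : ι → G) :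
    ∃ i j, (lam : WithBot G) ≤ A i j + ((x j - x i : G) : WithBot G) := by
  obtain ⟨i, hi⟩ := Finite.exists_max (w - x)
  obtain ⟨j, hj⟩ := hw i
  have hdiff : w j - w i ≤ x j - x i := sub_le_sub_iff.mpr <| by
    simpa only [add_comm] using sub_le_sub_iff.mp (hi j)
  refine ⟨i, j, ?_⟩
  calc (lam : WithBot G)
      ≤ A i j + ((w j - w i : G) : WithBot G) := withBot_coe_le_add_coe_sub_iff.mpr hj
    _ ≤ A i j + ((x j - x i : G) : WithBot G) := by gcongr; exact_mod_cast hdiff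

theorem IsMaxPlusSubeigenvector.sup'_add_sub_eq [Fintype ι] [Nonempty ι] {x w : ι → G}
    (hx : IsMaxPlusSubeigenvector A lam x) (hw : IsMaxPlusSupereigenvector A lam w) :
    Finset.univ.sup' Finset.univ_nonempty
      (fun p : ι × ι => A p.1 p.2 + ((x p.2 - x p.1 : G) : WithBot G)) = (lam : WithBot G) := by
  apply le_antisymm
  · exact Finset.sup'_le _ _ fun p _ => isMaxPlusSubeigenvector_iff_add_sub_le.mp hx p.1 p.2
  · obtain ⟨i, j, hij⟩ := hw.exists_le_add_sub x
    exact Finset.le_sup'_of_le _ (Finset.mem_univ (i, j)) hij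

theorem stmt3_general [Fintype ι] [Nonempty ι] [Ring R] [PartialOrder R] [IsOrderedRing R]
    [Module R G] [PosSMulMono R G] {u v w : ι → G}
    (hw : IsMaxPlusSupereigenvector A lam w)
    (hu : IsMaxPlusSubeigenvector A lam u)
    (hv : IsMaxPlusSubeigenvector (fun i j => A j i) lam v)
    {α : R} (hα0 : 0 ≤ α) (hα1 : α ≤ 1) :
    Finset.univ.sup' Finset.univ_nonempty
      (fun p : ι × ι => A p.1 p.2 +
        (((α • u p.2 + (α - 1) • v p.2) - (α • u p.1 + (α - 1) • v p.1) : G) : WithBot G)) =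
      (lam : WithBot G) := by
  have hcombo : α • u + (1 - α) • -v = fun i => α • u i + (α - 1) • v i := by
    rw [smul_neg, ← neg_smul, neg_sub]; rfl
  have hsub : IsMaxPlusSubeigenvector A lam (fun i => α • u i + (α - 1) • v i) :=
    hcombo ▸ convex_setOf_isMaxPlusSubeigenvector A lam hu hv.neg_of_transpose hα0
      (sub_nonneg.mpr hα1) (add_sub_cancel α 1)
  exact hsub.sup'_add_sub_eq hw

end LinearOrderedGroup

namespace IsMaxPlusEigenpair

variable {n : ℕ} [NeZero n] {A : Fin n → Fin n → WithBot ℝ} {lam : ℝ} {u : Fin n → ℝ}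

theorem isMaxPlusSubeigenvector (hu : IsMaxPlusEigenpair A lam u) :
    IsMaxPlusSubeigenvector A lam u := fun i j =>
  (Finset.le_sup' (fun j => A i j + (u j : WithBot ℝ)) (Finset.mem_univ j)).trans_eq (hu i)

theorem isMaxPlusSupereigenvector (hu : IsMaxPlusEigenpair A lam u) :
    IsMaxPlusSupereigenvector A lam u := by
  intro i
  obtain ⟨j, -, hj⟩ := Finset.exists_mem_eq_sup' Finset.univ_nonempty
    (fun j => A i j + (u j : WithBot ℝ))
  exact ⟨j, ((hu i).symm.trans hj).le⟩

end IsMaxPlusEigenpair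

theorem stmt3 (n : ℕ) [NeZero n] (A : Fin n → Fin n → WithBot ℝ)
    (lam : ℝ) (u v : Fin n → ℝ)
    (hu : IsMaxPlusEigenpair A lam u)
    (hv : IsMaxPlusEigenpair (fun i j => A j i) lam v)
    (α : ℝ) (hα0 : 0 ≤ α) (hα1 : α ≤ 1) :
    maxPlusRayleigh A (fun i => α * u i + (α - 1) * v i) = ((lam : ℝ) : WithBot ℝ) := by
  simpa only [maxPlusRayleigh, smul_eq_mul] using stmt3_general hu.isMaxPlusSupereigenvector
    hu.isMaxPlusSubeigenvector hv.isMaxPlusSubeigenvector hα0 hα1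
end

section
/- Let n ≥ 1 and let A = (a_{ij}) be an n×n matrix with entries in ℝ ∪ {−∞}. Suppose λ ∈ ℝ and there exist u ∈ ℝⁿ with max_{1≤j≤n} (a_{ij} + u_j) = λ + u_i for every i. Then λ is the least element of the set { max_{1≤i,j≤n} (a_{ij} + x_j − x_i) : x ∈ ℝⁿ }; that is, min_{x ∈ ℝⁿ} max_{1≤i,j≤n} (a_{ij} + x_j − x_i) = λ and the minimum is attained. -/
/-! The max-plus map `x ↦ A ⊗ x` is monotone and commutes with adding a constant to all
coordinates, and the Rayleigh quotient of `A` at `x` is the least `r` with `A ⊗ x ≤ r + x`. Given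
`lam + w ≤ A ⊗ w`, choose the constant `c` for which `w ≤ x + c` with equality at some `i`. Then
`lam + w i ≤ (A ⊗ w) i ≤ (A ⊗ x) i + c ≤ r + x i + c = r + w i`, so `lam ≤ r`. If `A ⊗ u ≤ lam + u`,
the quotient at `u` is at most `lam`, so the bound is attained there. -/

theorem withBot_add_coe_sub_le_iff {G : Type*} [AddGroup G] [LE G] [AddRightMono G]
    {a r : WithBot G} {s t : G} :
    a + ((s - t : G) : WithBot G) ≤ r ↔ a + (s : WithBot G) ≤ r + (t : WithBot G) := by
  rw [← WithBot.add_le_add_iff_right (WithBot.coe_ne_bot (a := t)), add_assoc, ← WithBot.coe_add,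
    sub_add_cancel]

section MaxPlus

variable {ι G : Type*} [Fintype ι] [Nonempty ι] [AddCommGroup G] [LinearOrder G]

/-- The max-plus matrix-vector product `A ⊗ x` of a matrix over `G ∪ {-∞}` with a finite vector,
used to express eigenvector (in)equalities. -/
def maxPlusMulVec (A : ι → ι → WithBot G) (x : ι → G) (i : ι) : WithBot G :=
  Finset.univ.sup' Finset.univ_nonempty (fun j => A i j + (x j : WithBot G))

/-- The max-plus Rayleigh quotient `max_{i,j} (a_{ij} + x_j - x_i)` over an arbitrary finite index
type and linearly ordered group. For `ι = Fin n` and `G = ℝ` it unfolds to `maxPlusRayleigh`. -/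
def maxPlusRayleighQuotient (A : ι → ι → WithBot G) (x : ι → G) : WithBot G :=
  Finset.univ.sup' Finset.univ_nonempty
    (fun p : ι × ι => A p.1 p.2 + ((x p.2 - x p.1 : G) : WithBot G))

variable [IsOrderedAddMonoid G]

theorem maxPlusMulVec_mono (A : ι → ι → WithBot G) : Monotone (maxPlusMulVec A) :=
  fun _ _ hxy _ => Finset.sup'_mono_fun fun j _ =>
    add_le_add_right (WithBot.coe_le_coe.2 (hxy j)) _

theorem maxPlusMulVec_add_const (A : ι → ι → WithBot G) (x : ι → G) (c : G) (i : ι) :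
    maxPlusMulVec A (fun j => x j + c) i = maxPlusMulVec A x i + c := by
  let addConst : WithBot G →o WithBot G := ⟨(· + (c : WithBot G)), add_left_mono⟩
  calc maxPlusMulVec A (fun j => x j + c) i
      = Finset.univ.sup' Finset.univ_nonempty (fun j => A i j + (x j : WithBot G) + c) := by
        simp only [maxPlusMulVec, WithBot.coe_add, add_assoc]
    _ = maxPlusMulVec A x i + c := (map_finset_sup' addConst _ _).symm

theorem maxPlusRayleighQuotient_le_iff {A : ι → ι → WithBot G} {x : ι → G} {r : WithBot G} :
    maxPlusRayleighQuotient A x ≤ r ↔ ∀ i, maxPlusMulVec A x i ≤ r + (x i : WithBot G) := by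
  simp only [maxPlusRayleighQuotient, maxPlusMulVec, Finset.sup'_le_iff, Finset.mem_univ,
    forall_const, Prod.forall, withBot_add_coe_sub_le_iff]

theorem maxPlusMulVec_le_maxPlusRayleighQuotient_add (A : ι → ι → WithBot G) (x : ι → G) (i : ι) :
    maxPlusMulVec A x i ≤ maxPlusRayleighQuotient A x + (x i : WithBot G) :=
  maxPlusRayleighQuotient_le_iff.1 le_rfl i

theorem le_maxPlusRayleighQuotient {A : ι → ι → WithBot G} {lam : WithBot G} {w : ι → G}
    (hw : ∀ i, lam + (w i : WithBot G) ≤ maxPlusMulVec A w i) (x : ι → G) :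
    lam ≤ maxPlusRayleighQuotient A x := by
  obtain ⟨i, hi⟩ := Finite.exists_max fun j => w j - x j
  let c := w i - x i
  have w_le : w ≤ fun j => x j + c := fun j => sub_le_iff_le_add'.1 (hi j)
  have touch : x i + c = w i := add_sub_cancel (x i) (w i)
  refine WithBot.le_of_add_le_add_right (WithBot.coe_ne_bot (a := w i)) ?_
  calc lam + (w i : WithBot G)
      ≤ maxPlusMulVec A w i := hw i
    _ ≤ maxPlusMulVec A (fun j => x j + c) i := maxPlusMulVec_mono A w_le i
    _ = maxPlusMulVec A x i + c := maxPlusMulVec_add_const A x c i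
    _ ≤ maxPlusRayleighQuotient A x + (x i : WithBot G) + c :=
        add_le_add_left (maxPlusMulVec_le_maxPlusRayleighQuotient_add A x i) _
    _ = maxPlusRayleighQuotient A x + (w i : WithBot G) := by
        rw [add_assoc, ← WithBot.coe_add, touch]

theorem stmt4_general {A : ι → ι → WithBot G} {lam : WithBot G} {u w : ι → G}
    (hu : ∀ i, maxPlusMulVec A u i ≤ lam + (u i : WithBot G))
    (hw : ∀ i, lam + (w i : WithBot G) ≤ maxPlusMulVec A w i) :
    IsLeast (Set.range (maxPlusRayleighQuotient A)) lam := by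
  refine ⟨⟨u, le_antisymm ?_ ?_⟩, ?_⟩
  · exact maxPlusRayleighQuotient_le_iff.2 hu
  · exact le_maxPlusRayleighQuotient hw u
  · exact Set.forall_mem_range.2 (le_maxPlusRayleighQuotient hw)

end MaxPlus

theorem stmt4 (n : ℕ) [NeZero n] (A : Fin n → Fin n → WithBot ℝ)
    (lam : ℝ) (u : Fin n → ℝ) (h : IsMaxPlusEigenpair A lam u) :
    IsLeast {y : WithBot ℝ | ∃ x : Fin n → ℝ, maxPlusRayleigh A x = y}
      ((lam : ℝ) : WithBot ℝ) :=
  stmt4_general (fun i => (h i).le) (fun i => (h i).ge)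
end

section
/- Let n ≥ 1, m ≥ 1, let r_1, …, r_m ∈ ℝⁿ (with coordinates r_{ij} for i = 1, …, n and j = 1, …, m) and let w_1, …, w_m ∈ ℝ. Define p_i = max_{1≤j≤m} (r_{ij} + w_j) and q_i = min_{1≤j≤m} (r_{ij} − w_j) for each i. Then for every x ∈ ℝⁿ, max_{1≤j≤m} ( w_j + max_{1≤i≤n} |r_{ij} − x_i| ) = max_{1≤i≤n} max( p_i − x_i , x_i − q_i ). -/
section SemilatticeSup

variable {ι α : Type*} [SemilatticeSup α] {s : Finset ι}

theorem finset_sup'_sup_distrib (hs : s.Nonempty) (f g : ι → α) :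
    s.sup' hs (fun i => f i ⊔ g i) = s.sup' hs f ⊔ s.sup' hs g :=
  eq_of_forall_ge_iff fun c => by
    simp only [Finset.sup'_le_iff, sup_le_iff, forall₂_and]

theorem add_finset_sup' [AddGroup α] [AddLeftMono α] (hs : s.Nonempty) (f : ι → α) (a : α) :
    a + s.sup' hs f = s.sup' hs (fun i => a + f i) :=
  map_finset_sup' (OrderIso.addLeft a) hs f

theorem finset_sup'_sub [AddGroup α] [AddRightMono α] (hs : s.Nonempty) (f : ι → α) (a : α) :
    s.sup' hs f - a = s.sup' hs (fun i => f i - a) :=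
  map_finset_sup' (OrderIso.subRight a) hs f

end SemilatticeSup

theorem sub_finset_inf' {ι α : Type*} [Lattice α] [AddGroup α] [AddLeftMono α] [AddRightMono α]
    {s : Finset ι} (hs : s.Nonempty) (f : ι → α) (a : α) :
    a - s.inf' hs f = s.sup' hs (fun i => a - f i) :=
  map_finset_inf' (OrderIso.subLeft a) hs f

section LatticeOrderedGroup

variable {ι κ α : Type*} [Lattice α] [AddCommGroup α] [AddLeftMono α]

theorem add_abs_sub_eq_sup (a w x : α) : w + |a - x| = (a + w - x) ⊔ (x - (a - w)) :=
  calc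
    w + |a - x| = w + ((a - x) ⊔ (x - a)) := by rw [abs, neg_sub]
    _ = (w + (a - x)) ⊔ (w + (x - a)) := add_sup _ _ _
    _ = (a + w - x) ⊔ (x - (a - w)) := by congr 1 <;> abel

theorem finset_sup'_add_abs_sub {t : Finset κ} (ht : t.Nonempty) (a w : κ → α) (x : α) :
    t.sup' ht (fun j => w j + |a j - x|) =
      (t.sup' ht (fun j => a j + w j) - x) ⊔ (x - t.inf' ht (fun j => a j - w j)) := by
  simp only [add_abs_sub_eq_sup, finset_sup'_sup_distrib, finset_sup'_sub, sub_finset_inf']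

theorem stmt5_general {s : Finset ι} {t : Finset κ} (hs : s.Nonempty) (ht : t.Nonempty)
    (r : ι → κ → α) (w : κ → α) (p q : ι → α)
    (hp : ∀ i ∈ s, p i = t.sup' ht (fun j => r i j + w j))
    (hq : ∀ i ∈ s, q i = t.inf' ht (fun j => r i j - w j)) (x : ι → α) :
    t.sup' ht (fun j => w j + s.sup' hs (fun i => |r i j - x i|)) =
      s.sup' hs (fun i => (p i - x i) ⊔ (x i - q i)) :=
  calc
    t.sup' ht (fun j => w j + s.sup' hs (fun i => |r i j - x i|))
      = t.sup' ht (fun j => s.sup' hs (fun i => w j + |r i j - x i|)) := by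
        simp only [add_finset_sup']
    _ = s.sup' hs (fun i => t.sup' ht (fun j => w j + |r i j - x i|)) :=
        Finset.sup'_comm ht hs _
    _ = s.sup' hs (fun i => (p i - x i) ⊔ (x i - q i)) :=
        Finset.sup'_congr hs rfl fun i hi => by
          rw [finset_sup'_add_abs_sub, hp i hi, hq i hi]

end LatticeOrderedGroup

theorem stmt5 (n m : ℕ) [NeZero n] [NeZero m]
    (r : Fin n → Fin m → ℝ) (w : Fin m → ℝ) (p q : Fin n → ℝ)
    (hp : ∀ i, p i = Finset.univ.sup' Finset.univ_nonempty (fun j => r i j + w j))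
    (hq : ∀ i, q i = Finset.univ.inf' Finset.univ_nonempty (fun j => r i j - w j))
    (x : Fin n → ℝ) :
    Finset.univ.sup' Finset.univ_nonempty
        (fun j => w j + Finset.univ.sup' Finset.univ_nonempty (fun i => |r i j - x i|))
      = Finset.univ.sup' Finset.univ_nonempty
        (fun i => max (p i - x i) (x i - q i)) :=
  stmt5_general _ _ r w p q (fun i _ => hp i) (fun i _ => hq i) x
end

section
/- Let n ≥ 1 and let p, q ∈ ℝⁿ. Set λ = (1/2)·max_{1≤i≤n} (p_i − q_i). Then for every real α with 0 ≤ α ≤ 1, the vector x with entries x_i = α·(p_i − λ) + (1 − α)·(q_i + λ) satisfies max_{1≤i≤n} max( p_i − x_i , x_i − q_i ) = λ. -/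
/-!
For every `x`, the sum of `p i - x i` and `x i - q i` is `p i - q i`, so twice the cost of `x` is at
least `max (p i - q i) = 2λ`. The cost is at most `λ` exactly when each `x i` lies between `p i - λ`
and `q i + λ`. These bounds are in the right order because `p i - q i ≤ 2λ`, so the minimizers are
the coordinatewise convex combinations of the two.
-/

section OrderedGroup

variable {ι G : Type*} [AddCommGroup G] [LinearOrder G] [IsOrderedAddMonoid G]
  {s : Finset ι} (hs : s.Nonempty) (p q x : ι → G)

theorem sup'_max_sub_le_iff {r : G} :
    s.sup' hs (fun i => max (p i - x i) (x i - q i)) ≤ r ↔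
      ∀ i ∈ s, x i ∈ Set.Icc (p i - r) (q i + r) := by
  simp only [Finset.sup'_le_iff, max_le_iff, Set.mem_Icc, sub_le_iff_le_add, add_comm]

theorem sup'_sub_le_two_nsmul_sup'_max_sub :
    s.sup' hs (fun i => p i - q i) ≤
      2 • s.sup' hs (fun i => max (p i - x i) (x i - q i)) := by
  refine Finset.sup'_le hs _ fun i hi => ?_
  have max_le_cost := Finset.le_sup' (fun i => max (p i - x i) (x i - q i)) hi
  calc p i - q i = (p i - x i) + (x i - q i) := (sub_add_sub_cancel _ _ _).symm
    _ ≤ _ + _ := add_le_add ((le_max_left _ _).trans max_le_cost)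
        ((le_max_right _ _).trans max_le_cost)
    _ = _ := (two_nsmul _).symm

variable {p q} {lam : G}

theorem sup'_max_sub_eq_iff_forall_mem_Icc
    (hlam : 2 • lam = s.sup' hs (fun i => p i - q i)) :
    s.sup' hs (fun i => max (p i - x i) (x i - q i)) = lam ↔
      ∀ i ∈ s, x i ∈ Set.Icc (p i - lam) (q i + lam) := by
  have lam_le_cost : lam ≤ s.sup' hs (fun i => max (p i - x i) (x i - q i)) :=
    le_of_nsmul_le_nsmul_right two_ne_zero
      (hlam.trans_le (sup'_sub_le_two_nsmul_sup'_max_sub hs p q x))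
  rw [← sup'_max_sub_le_iff hs, lam_le_cost.ge_iff_eq, eq_comm]

theorem sub_le_add_of_two_nsmul_eq_sup'_sub
    (hlam : 2 • lam = s.sup' hs (fun i => p i - q i)) {i : ι} (hi : i ∈ s) :
    p i - lam ≤ q i + lam := by
  have sub_le_two_lam : p i - q i ≤ lam + lam := by
    rw [← two_nsmul, hlam]
    exact Finset.le_sup' (fun i => p i - q i) hi
  rwa [sub_le_iff_le_add, add_assoc, ← sub_le_iff_le_add']

end OrderedGroup

theorem stmt7_general {ι K : Type*} [Field K] [LinearOrder K] [IsStrictOrderedRing K]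
    {s : Finset ι} (hs : s.Nonempty) {p q : ι → K} {lam : K}
    (hlam : lam = (1 / 2) * s.sup' hs (fun i => p i - q i))
    {α : ι → K} (hα : ∀ i ∈ s, α i ∈ Set.Icc 0 1)
    {x : ι → K} (hx : ∀ i ∈ s, x i = α i * (p i - lam) + (1 - α i) * (q i + lam)) :
    s.sup' hs (fun i => max (p i - x i) (x i - q i)) = lam := by
  have two_lam : 2 • lam = s.sup' hs (fun i => p i - q i) := by
    rw [hlam, nsmul_eq_mul]
    ring
  refine (sup'_max_sub_eq_iff_forall_mem_Icc hs x two_lam).2 fun i hi => ?_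
  have mem_segment : x i ∈ segment K (p i - lam) (q i + lam) :=
    ⟨α i, 1 - α i, (hα i hi).1, sub_nonneg.2 (hα i hi).2, add_sub_cancel _ _, (hx i hi).symm⟩
  exact segment_subset_Icc (sub_le_add_of_two_nsmul_eq_sup'_sub hs two_lam hi) mem_segment

theorem stmt7 (n : ℕ) [NeZero n] (p q : Fin n → ℝ) (lam : ℝ)
    (hlam : lam = (1 / 2) * Finset.univ.sup' Finset.univ_nonempty (fun i => p i - q i))
    (α : ℝ) (hα0 : 0 ≤ α) (hα1 : α ≤ 1)
    (x : Fin n → ℝ) (hx : ∀ i, x i = α * (p i - lam) + (1 - α) * (q i + lam)) :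
    Finset.univ.sup' Finset.univ_nonempty
      (fun i => max (p i - x i) (x i - q i)) = lam :=
  stmt7_general Finset.univ_nonempty hlam (fun _ _ => ⟨hα0, hα1⟩) fun i _ => hx i
end

section
/- Let n ≥ 1 and let p, q ∈ ℝⁿ. Set λ = (1/2)·max_{1≤i≤n} (p_i − q_i). Then λ is the least element of the set { max_{1≤i≤n} max(p_i − x_i, x_i − q_i) : x ∈ ℝⁿ }; that is, min_{x ∈ ℝⁿ} max_{1≤i≤n} max(p_i − x_i, x_i − q_i) = λ and the minimum is attained. -/
/-!
The objective separates: its `i`-th term depends on `x i` alone, so minimizing the maximum amounts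
to minimizing each term. The average of `a - x` and `x - b` is `(a - b) / 2` for every `x`, hence
their maximum is smallest when the two are equal, at the midpoint of `a` and `b`.
-/

theorem isLeast_range_finset_sup' {ι α : Type*} {X : ι → Type*} [SemilatticeSup α]
    {s : Finset ι} (hs : s.Nonempty) {f : ∀ i, X i → α} {m : ι → α}
    (hf : ∀ i, IsLeast (Set.range (f i)) (m i)) :
    IsLeast (Set.range fun x : ∀ i, X i => s.sup' hs fun i => f i (x i)) (s.sup' hs m) := by
  constructor
  · choose x hx using fun i => (hf i).1
    exact ⟨x, by simp only [hx]⟩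
  · rintro _ ⟨x, rfl⟩
    exact Finset.sup'_mono_fun fun i _ => (hf i).2 (Set.mem_range_self (x i))

section LinearOrderedField

variable {K : Type*} [Field K] [LinearOrder K] [IsStrictOrderedRing K]

theorem half_mul_add_le_max (a b : K) : 1 / 2 * (a + b) ≤ max a b := by
  linarith [le_max_left a b, le_max_right a b]

theorem isLeast_range_max_sub_sub (a b : K) :
    IsLeast (Set.range fun x => max (a - x) (x - b)) (1 / 2 * (a - b)) := by
  constructor
  · have left_eq : a - (a + b) / 2 = 1 / 2 * (a - b) := by ring
    have right_eq : (a + b) / 2 - b = 1 / 2 * (a - b) := by ring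
    exact ⟨(a + b) / 2, by simp only [left_eq, right_eq, max_self]⟩
  · rintro _ ⟨x, rfl⟩
    calc 1 / 2 * (a - b) = 1 / 2 * ((a - x) + (x - b)) := by rw [sub_add_sub_cancel]
      _ ≤ max (a - x) (x - b) := half_mul_add_le_max _ _

theorem stmt8_general {ι : Type*} {s : Finset ι} (hs : s.Nonempty) (p q : ι → K) :
    IsLeast (Set.range fun x : ι → K => s.sup' hs fun i => max (p i - x i) (x i - q i))
      (1 / 2 * s.sup' hs fun i => p i - q i) := by
  rw [Finset.mul₀_sup' one_half_pos.le]
  exact isLeast_range_finset_sup' hs fun i => isLeast_range_max_sub_sub (p i) (q i)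

end LinearOrderedField

theorem stmt8 (n : ℕ) [NeZero n] (p q : Fin n → ℝ) (lam : ℝ)
    (hlam : lam = (1 / 2) * Finset.univ.sup' Finset.univ_nonempty (fun i => p i - q i)) :
    IsLeast {y : ℝ | ∃ x : Fin n → ℝ,
      Finset.univ.sup' Finset.univ_nonempty (fun i => max (p i - x i) (x i - q i)) = y}
      lam := by
  subst hlam
  exact stmt8_general Finset.univ_nonempty p q
end

section
/- Let n ≥ 1, m ≥ 2, let r_1, …, r_m ∈ ℝⁿ (with coordinates r_{ij} for i = 1, …, n and j = 1, …, m) and let w_1, …, w_m ∈ ℝ. Define p_i = max_{1≤j≤m} (r_{ij} + w_j), q_i = min_{1≤j≤m} (r_{ij} − w_j), and λ = (1/2)·max_{1≤i≤n} (p_i − q_i). Then: (1) for every x ∈ ℝⁿ, max_{1≤j≤m} ( max_{1≤i≤n} |r_{ij} − x_i| + w_j ) ≥ λ; and (2) for every real α with 0 ≤ α ≤ 1, the vector x with entries x_i = α·(p_i − λ) + (1 − α)·(q_i + λ) satisfies max_{1≤j≤m} ( max_{1≤i≤n} |r_{ij} − x_i| + w_j ) = λ. Hence min_{x ∈ ℝⁿ}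 max_{1≤j≤m} ( max_{1≤i≤n} |r_{ij} − x_i| + w_j ) = λ. -/
/-!
For a level `t`, the inequalities `|r i j - x i| + w j ≤ t` decouple over the coordinates of `x`:
they say that `x` lies in the box `∏ i, [p i - t, q i + t]`. This box is nonempty exactly when
`λ ≤ t`, which gives the lower bound. The points of the box at level `λ`, among them the segment
between its lowest and highest corners, attain it.
-/

open Set

section OrderedGroup

variable {ι κ G : Type*} [Fintype κ] [Nonempty κ] [AddCommGroup G] [LinearOrder G]

/-- The objective of the weighted minimax location problem: the largest of the values
`ρ(r_j, x) + w_j`, where `ρ` is the Chebyshev distance and `r_j` has coordinates `r i j`. -/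
def minimaxCost [Fintype ι] [Nonempty ι] (r : ι → κ → G) (w : κ → G) (x : ι → G) : G :=
  Finset.univ.sup' Finset.univ_nonempty
    (fun j => Finset.univ.sup' Finset.univ_nonempty (fun i => |r i j - x i|) + w j)

/-- The vector `p`: the largest value of `r i j + w j` in each coordinate `i`. -/
def upperEnvelope (r : ι → κ → G) (w : κ → G) (i : ι) : G :=
  Finset.univ.sup' Finset.univ_nonempty (fun j => r i j + w j)

/-- The vector `q`: the smallest value of `r i j - w j` in each coordinate `i`. -/
def lowerEnvelope (r : ι → κ → G) (w : κ → G) (i : ι) : G :=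
  Finset.univ.inf' Finset.univ_nonempty (fun j => r i j - w j)

variable [IsOrderedAddMonoid G] {r : ι → κ → G} {w : κ → G} {x : ι → G} {t : G}

theorem minimaxCost_le_iff_forall_abs [Fintype ι] [Nonempty ι] :
    minimaxCost r w x ≤ t ↔ ∀ i j, |r i j - x i| + w j ≤ t := by
  simp only [minimaxCost, Finset.sup'_le_iff, Finset.mem_univ, true_imp_iff,
    ← le_sub_iff_add_le]
  exact forall_comm

theorem upperEnvelope_sub_le_iff {i : ι} {y : G} :
    upperEnvelope r w i - t ≤ y ↔ ∀ j, r i j + w j - t ≤ y := by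
  simp only [upperEnvelope, sub_le_iff_le_add, Finset.sup'_le_iff, Finset.mem_univ, true_imp_iff]

theorem le_lowerEnvelope_add_iff {i : ι} {y : G} :
    y ≤ lowerEnvelope r w i + t ↔ ∀ j, y ≤ r i j - w j + t := by
  simp only [lowerEnvelope, ← sub_le_iff_le_add, Finset.le_inf'_iff, Finset.mem_univ,
    true_imp_iff]

theorem abs_sub_add_le_iff {a b c : G} :
    |a - b| + c ≤ t ↔ a + c - t ≤ b ∧ b ≤ a - c + t := by
  rw [← le_sub_iff_add_le, abs_sub_le_iff, sub_le_comm, sub_sub_eq_add_sub,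
    sub_le_iff_le_add' (a := b), add_sub_left_comm, add_comm t (a - c)]

theorem minimaxCost_le_iff_mem_Icc [Fintype ι] [Nonempty ι] :
    minimaxCost r w x ≤ t ↔
      x ∈ Icc (fun i => upperEnvelope r w i - t) (fun i => lowerEnvelope r w i + t) := by
  simp only [minimaxCost_le_iff_forall_abs, abs_sub_add_le_iff, mem_Icc, Pi.le_def,
    upperEnvelope_sub_le_iff, le_lowerEnvelope_add_iff, forall_and]

end OrderedGroup

section OrderedField

variable {ι κ K : Type*} [Fintype ι] [Nonempty ι] [Fintype κ] [Nonempty κ]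
  [Field K] [LinearOrder K]

/-- The optimal value `λ` of the weighted minimax location problem. -/
def minimaxRadius (r : ι → κ → K) (w : κ → K) : K :=
  (1 / 2) * Finset.univ.sup' Finset.univ_nonempty
    (fun i => upperEnvelope r w i - lowerEnvelope r w i)

variable [IsStrictOrderedRing K] (r : ι → κ → K) (w : κ → K)

theorem minimaxRadius_le_iff {t : K} :
    minimaxRadius r w ≤ t ↔
      (fun i => upperEnvelope r w i - t) ≤ fun i => lowerEnvelope r w i + t := by
  rw [minimaxRadius, one_div, inv_mul_le_iff₀ two_pos, Finset.sup'_le_iff]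
  simp only [Finset.mem_univ, true_imp_iff, Pi.le_def]
  refine forall_congr' fun i => ?_
  constructor <;> intro h <;> linarith

theorem minimaxRadius_le_minimaxCost (x : ι → K) : minimaxRadius r w ≤ minimaxCost r w x := by
  obtain ⟨lower, upper⟩ := minimaxCost_le_iff_mem_Icc.mp (le_refl (minimaxCost r w x))
  exact (minimaxRadius_le_iff r w).mpr (lower.trans upper)

theorem minimaxCost_eq_minimaxRadius_iff {x : ι → K} :
    minimaxCost r w x = minimaxRadius r w ↔
      x ∈ Icc (fun i => upperEnvelope r w i - minimaxRadius r w)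
        (fun i => lowerEnvelope r w i + minimaxRadius r w) :=
  (minimaxRadius_le_minimaxCost r w x).ge_iff_eq'.symm.trans minimaxCost_le_iff_mem_Icc

theorem minimaxCost_segment_eq_minimaxRadius {α : K} (hα₀ : 0 ≤ α) (hα₁ : α ≤ 1) :
    minimaxCost r w (fun i => α * (upperEnvelope r w i - minimaxRadius r w)
      + (1 - α) * (lowerEnvelope r w i + minimaxRadius r w)) = minimaxRadius r w := by
  have corners_le := (minimaxRadius_le_iff r w).mp le_rfl
  exact (minimaxCost_eq_minimaxRadius_iff r w).mpr <|
    convex_Icc _ _ (left_mem_Icc.mpr corners_le) (right_mem_Icc.mpr corners_le)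
      hα₀ (sub_nonneg.mpr hα₁) (add_sub_cancel α 1)

theorem stmt9_general :
    (∀ x : ι → K, minimaxRadius r w ≤ minimaxCost r w x) ∧
    (∀ α : K, 0 ≤ α → α ≤ 1 → ∀ x : ι → K,
      (∀ i, x i = α * (upperEnvelope r w i - minimaxRadius r w)
        + (1 - α) * (lowerEnvelope r w i + minimaxRadius r w)) →
      minimaxCost r w x = minimaxRadius r w) ∧
    IsLeast {y : K | ∃ x : ι → K, minimaxCost r w x = y} (minimaxRadius r w) := by
  refine ⟨minimaxRadius_le_minimaxCost r w, fun α hα₀ hα₁ x hx => ?_,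
    ⟨_, minimaxCost_segment_eq_minimaxRadius r w le_rfl zero_le_one⟩, ?_⟩
  · rw [funext hx, minimaxCost_segment_eq_minimaxRadius r w hα₀ hα₁]
  · rintro _ ⟨x, rfl⟩
    exact minimaxRadius_le_minimaxCost r w x

end OrderedField

theorem stmt9 (n m : ℕ) [NeZero n] [NeZero m] (hm : 2 ≤ m)
    (r : Fin n → Fin m → ℝ) (w : Fin m → ℝ) (p q : Fin n → ℝ) (lam : ℝ)
    (hp : ∀ i, p i = Finset.univ.sup' Finset.univ_nonempty (fun j => r i j + w j))
    (hq : ∀ i, q i = Finset.univ.inf' Finset.univ_nonempty (fun j => r i j - w j))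
    (hlam : lam = (1 / 2) * Finset.univ.sup' Finset.univ_nonempty (fun i => p i - q i)) :
    (∀ x : Fin n → ℝ,
      lam ≤ Finset.univ.sup' Finset.univ_nonempty
        (fun j => Finset.univ.sup' Finset.univ_nonempty (fun i => |r i j - x i|) + w j)) ∧
    (∀ α : ℝ, 0 ≤ α → α ≤ 1 → ∀ x : Fin n → ℝ,
      (∀ i, x i = α * (p i - lam) + (1 - α) * (q i + lam)) →
      Finset.univ.sup' Finset.univ_nonempty
        (fun j => Finset.univ.sup' Finset.univ_nonempty (fun i => |r i j - x i|) + w j) = lam) ∧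
    IsLeast {y : ℝ | ∃ x : Fin n → ℝ,
      Finset.univ.sup' Finset.univ_nonempty
        (fun j => Finset.univ.sup' Finset.univ_nonempty (fun i => |r i j - x i|) + w j) = y}
      lam := by
  obtain ⟨rfl, rfl⟩ : p = upperEnvelope r w ∧ q = lowerEnvelope r w := ⟨funext hp, funext hq⟩
  exact hlam ▸ stmt9_general r w
end

section
/- Let n ≥ 1, m ≥ 2, let r_1, …, r_m ∈ ℝⁿ (with coordinates r_{ij}), let w_1, …, w_m ∈ ℝ and d_1, …, d_m ∈ ℝ. Define p⁰_i = max_{1≤j≤m} (r_{ij} + w_j), q⁰_i = min_{1≤j≤m} (r_{ij} − w_j), λ₀ = (1/2)·max_{1≤i≤n} (p⁰_i − q⁰_i), φ₀(x) = max_{1≤i≤n} max( p⁰_i − x_i , x_i − q⁰_i ) − λ₀, and p¹_i = max_{1≤j≤m} (r_{ij} − d_j), q¹_i = min_{1≤j≤m} (r_{ij} + d_j), φ₁(x) = max_{1≤i≤n} max( p¹_i − x_i , x_i − q¹_i ). Then for every x ∈ ℝⁿ, max( φ₀(x), φ₁(x) ) ≤ 0 if and only if x minimizes the unconstrained objective,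 i.e. max_{1≤j≤m} ( max_{1≤i≤n} |r_{ij} − x_i| + w_j ) = λ₀, and x is feasible, i.e. max_{1≤i≤n} |r_{ij} − x_i| ≤ d_j for every j = 1, …, m. -/
/-!
Since `|a - b| + c = max (a + c - b) (b - (a - c))`, interchanging the maxima over points and
coordinates turns a weighted Chebyshev cost `max_j (ρ(r_j, x) + w_j)` into the box form
`max_i max (p_i - x_i) (x_i - q_i)`. The weights `w` give the unconstrained objective, and the
weights `-d` give the constraint function. Since `p_i - q_i = (p_i - x_i) + (x_i - q_i)`, the box
form is at least half of `max_i (p_i - q_i)`, so a cost that is at most `λ₀` equals `λ₀`.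
-/

section OrderedAddCommGroup

variable {G ι κ : Type*} [AddCommGroup G] [LinearOrder G] [IsOrderedAddMonoid G]
  {s : Finset ι} {t : Finset κ}

theorem abs_sub_add_eq_max (a b c : G) : |a - b| + c = max (a + c - b) (b - (a - c)) := by
  rw [abs_eq_max_neg, ← max_add_add_right, neg_sub, sub_add_eq_add_sub, sub_add]

theorem sup'_abs_sub_add_eq_max (ht : t.Nonempty) (a w : κ → G) (b : G) :
    t.sup' ht (fun j => |a j - b| + w j) =
      max (t.sup' ht (fun j => a j + w j) - b) (b - t.inf' ht fun j => a j - w j) := by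
  refine eq_of_forall_ge_iff fun c => ?_
  simp only [abs_sub_add_eq_max, Finset.sup'_le_iff, Finset.le_inf'_iff, max_le_iff,
    sub_le_iff_le_add, sub_le_comm (a := b), forall_and]

theorem sup'_sup'_abs_sub_add_eq_sup'_max (hs : s.Nonempty) (ht : t.Nonempty)
    (r : ι → κ → G) (w : κ → G) (x : ι → G) :
    t.sup' ht (fun j => s.sup' hs (fun i => |r i j - x i|) + w j) =
      s.sup' hs fun i =>
        max (t.sup' ht (fun j => r i j + w j) - x i) (x i - t.inf' ht fun j => r i j - w j) := by
  calc t.sup' ht (fun j => s.sup' hs (fun i => |r i j - x i|) + w j)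
      = t.sup' ht fun j => s.sup' hs fun i => |r i j - x i| + w j := by
        simp only [Finset.sup'_add]
    _ = s.sup' hs fun i => t.sup' ht fun j => |r i j - x i| + w j :=
        Finset.sup'_comm ht hs _
    _ = _ := by simp only [sup'_abs_sub_add_eq_max]

theorem sup'_max_nonpos_iff_forall_sup'_abs_sub_le (hs : s.Nonempty) (ht : t.Nonempty)
    (r : ι → κ → G) (d : κ → G) (x : ι → G) :
    (s.sup' hs fun i => max (t.sup' ht (fun j => r i j - d j) - x i)
        (x i - t.inf' ht fun j => r i j + d j)) ≤ 0 ↔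
      ∀ j ∈ t, s.sup' hs (fun i => |r i j - x i|) ≤ d j := by
  have box_eq_cost := sup'_sup'_abs_sub_add_eq_sup'_max hs ht r (-d) x
  simp only [Pi.neg_apply, ← sub_eq_add_neg, sub_neg_eq_add] at box_eq_cost
  simp only [← box_eq_cost, Finset.sup'_le_iff ht, sub_nonpos]

theorem sup'_sub_le_two_nsmul_sup'_max (hs : s.Nonempty) (p q x : ι → G) :
    s.sup' hs (fun i => p i - q i) ≤ 2 • s.sup' hs fun i => max (p i - x i) (x i - q i) := by
  refine Finset.sup'_le hs _ fun i hi => ?_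
  have max_le_box := Finset.le_sup' (fun i => max (p i - x i) (x i - q i)) hi
  calc p i - q i = (p i - x i) + (x i - q i) := (sub_add_sub_cancel _ _ _).symm
    _ ≤ _ := add_le_add ((le_max_left _ _).trans max_le_box) ((le_max_right _ _).trans max_le_box)
    _ = _ := (two_nsmul _).symm

end OrderedAddCommGroup

theorem stmt14_general {K ι κ : Type*} [Field K] [LinearOrder K] [IsStrictOrderedRing K]
    [Fintype ι] [Nonempty ι] [Fintype κ] [Nonempty κ]
    (r : ι → κ → K) (w d : κ → K)
    (p0 q0 p1 q1 : ι → K) (lam0 : K) (φ0 φ1 : (ι → K) → K)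
    (hp0 : ∀ i, p0 i = Finset.univ.sup' Finset.univ_nonempty (fun j => r i j + w j))
    (hq0 : ∀ i, q0 i = Finset.univ.inf' Finset.univ_nonempty (fun j => r i j - w j))
    (hlam0 : lam0 = (1 / 2) * Finset.univ.sup' Finset.univ_nonempty (fun i => p0 i - q0 i))
    (hφ0 : ∀ x, φ0 x =
      Finset.univ.sup' Finset.univ_nonempty (fun i => max (p0 i - x i) (x i - q0 i)) - lam0)
    (hp1 : ∀ i, p1 i = Finset.univ.sup' Finset.univ_nonempty (fun j => r i j - d j))
    (hq1 : ∀ i, q1 i = Finset.univ.inf' Finset.univ_nonempty (fun j => r i j + d j))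
    (hφ1 : ∀ x, φ1 x =
      Finset.univ.sup' Finset.univ_nonempty (fun i => max (p1 i - x i) (x i - q1 i)))
    (x : ι → K) :
    max (φ0 x) (φ1 x) ≤ 0 ↔
      (Finset.univ.sup' Finset.univ_nonempty
          (fun j => Finset.univ.sup' Finset.univ_nonempty (fun i => |r i j - x i|) + w j)
        = lam0 ∧
       ∀ j, Finset.univ.sup' Finset.univ_nonempty (fun i => |r i j - x i|) ≤ d j) := by
  have feasible_iff : φ1 x ≤ 0 ↔
      ∀ j, Finset.univ.sup' Finset.univ_nonempty (fun i => |r i j - x i|) ≤ d j := by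
    simp only [hφ1, hp1, hq1, sup'_max_nonpos_iff_forall_sup'_abs_sub_le, Finset.mem_univ,
      true_imp_iff]
  have cost_eq_box : Finset.univ.sup' Finset.univ_nonempty
      (fun j => Finset.univ.sup' Finset.univ_nonempty (fun i => |r i j - x i|) + w j) =
      Finset.univ.sup' Finset.univ_nonempty fun i => max (p0 i - x i) (x i - q0 i) := by
    simp only [sup'_sup'_abs_sub_add_eq_sup'_max, hp0, hq0]
  have lam0_le_box : lam0 ≤
      Finset.univ.sup' Finset.univ_nonempty fun i => max (p0 i - x i) (x i - q0 i) := by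
    have := sup'_sub_le_two_nsmul_sup'_max Finset.univ_nonempty p0 q0 x
    rw [two_nsmul] at this
    linarith
  rw [max_le_iff, feasible_iff, hφ0, sub_nonpos, cost_eq_box, lam0_le_box.ge_iff_eq']

theorem stmt14 (n m : ℕ) [NeZero n] [NeZero m] (hm : 2 ≤ m)
    (r : Fin n → Fin m → ℝ) (w d : Fin m → ℝ)
    (p0 q0 p1 q1 : Fin n → ℝ) (lam0 : ℝ) (φ0 φ1 : (Fin n → ℝ) → ℝ)
    (hp0 : ∀ i, p0 i = Finset.univ.sup' Finset.univ_nonempty (fun j => r i j + w j))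
    (hq0 : ∀ i, q0 i = Finset.univ.inf' Finset.univ_nonempty (fun j => r i j - w j))
    (hlam0 : lam0 = (1 / 2) * Finset.univ.sup' Finset.univ_nonempty (fun i => p0 i - q0 i))
    (hφ0 : ∀ x, φ0 x =
      Finset.univ.sup' Finset.univ_nonempty (fun i => max (p0 i - x i) (x i - q0 i)) - lam0)
    (hp1 : ∀ i, p1 i = Finset.univ.sup' Finset.univ_nonempty (fun j => r i j - d j))
    (hq1 : ∀ i, q1 i = Finset.univ.inf' Finset.univ_nonempty (fun j => r i j + d j))
    (hφ1 : ∀ x, φ1 x =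
      Finset.univ.sup' Finset.univ_nonempty (fun i => max (p1 i - x i) (x i - q1 i)))
    (x : Fin n → ℝ) :
    max (φ0 x) (φ1 x) ≤ 0 ↔
      (Finset.univ.sup' Finset.univ_nonempty
          (fun j => Finset.univ.sup' Finset.univ_nonempty (fun i => |r i j - x i|) + w j)
        = lam0 ∧
       ∀ j, Finset.univ.sup' Finset.univ_nonempty (fun i => |r i j - x i|) ≤ d j) :=
  stmt14_general r w d p0 q0 p1 q1 lam0 φ0 φ1 hp0 hq0 hlam0 hφ0 hp1 hq1 hφ1 x
end
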